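/- For every k∈{1,…,K} and for either choice of sign: lim_{ρ→0⁺} (1/α(ρ))·ψ_ρ( (α(ρ)/ρ) · 2(1 ± |ln ρ|^{-1/4})/(γv_k²) ) = E[X²·1{|X|≥v_k}]/(γv_k²) − ℙ(|X|≥v_k)/γ. -/

import Mathlib

open MeasureTheory ProbabilityTheory Real

noncomputable section

namespace DiscretePrior

/-- Standard Gaussian measure on ℝ. -/
def stdG : Measure ℝ := gaussianReal 0 1

/-- The sparse prior (1−ρ)δ₀ + ρ P₀. -/
def sparsePrior (ρ : ℝ) (P0 : Measure ℝ) : Measure ℝ :=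
  ENNReal.ofReal (1 - ρ) • Measure.dirac 0 + ENNReal.ofReal ρ • P0

/-- E[X² 1(|X| ≥ v)]. -/
def truncSMge (P : Measure ℝ) (v : ℝ) : ℝ := ∫ x, if v ≤ |x| then x ^ 2 else 0 ∂P

/-- P(|X| ≥ v). -/
def tailProb (P : Measure ℝ) (v : ℝ) : ℝ := (P {x | v ≤ |x|}).toReal

/-- ψ_ρ(r) = E[ln ∫ exp(r X* x + √r Z x − r x²/2) dP_{0,ρ}(x)]. -/
def psiD (P0 : Measure ℝ) (ρ r : ℝ) : ℝ :=
  ∫ xs, ∫ z,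
    Real.log (∫ x, Real.exp (r * xs * x + Real.sqrt r * z * x - r * x ^ 2 / 2)
      ∂(sparsePrior ρ P0)) ∂stdG ∂(sparsePrior ρ P0)

/-!
Completing the square in the exponent shows that the logarithm of the evidence
`∫ exp(r X* x + √r Z x − r x²/2) dP₀(x)` is at most `(√r X* + Z)² / 2`, and by a Laplace argument it
is asymptotic to `r X*² / 2` as `r → ∞` whenever `X*` lies in the support of `P₀`. If
`r ~ c |ln ρ|`, the evidence of the sparse prior is therefore
`(1 − ρ) + ρ ^ (1 − c X*² / 2 + o(1))`, whose logarithm divided by `|ln ρ|` converges to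
`(c X*² / 2 − 1)₊`. Dominated convergence turns this into the limit of the part of
`ψ_ρ(r) / (ρ |ln ρ|)` carried by `P₀`. The part carried by the atom at `0` is negligible: by
Jensen's inequality its free energy is nonpositive, and it is at least `ln (1 − ρ)`. The choice
`c = 2 / v²` gives the theorem.
-/

instance : IsProbabilityMeasure stdG := inferInstanceAs (IsProbabilityMeasure (gaussianReal 0 1))

lemma integrable_sq_stdG : Integrable (fun z : ℝ ↦ z ^ 2) stdG :=
  (memLp_id_gaussianReal 2).integrable_sq

lemma integral_exp_mul_stdG (t : ℝ) : ∫ z, rexp (t * z) ∂stdG = rexp (t ^ 2 / 2) := by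
  simpa [mgf, stdG] using congrFun (mgf_fun_id_gaussianReal (μ := 0) (v := 1)) t

lemma memLp_id_of_ae_eq_or_eq_neg {ι : Type*} [Finite ι] {v : ι → ℝ} {P : Measure ℝ}
    [IsFiniteMeasure P] (h : ∀ᵐ x ∂P, ∃ i, x = v i ∨ x = -v i) {p : ENNReal} : MemLp id p P := by
  obtain ⟨C, hC⟩ := (Set.finite_range fun i ↦ |v i|).bddAbove
  refine .of_bound aestronglyMeasurable_id C ?_
  filter_upwards [h] with x ⟨i, hi⟩
  exact (abs_eq_abs.2 hi).trans_le (hC ⟨i, rfl⟩)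

/-- The log-likelihood ratio of the signal value `x` against `0` in the Gaussian channel
`y = √r X* + Z`, written in terms of the true signal value `xs` and the noise value `z`. -/
def logLikelihoodRatio (r xs z x : ℝ) : ℝ :=
  r * xs * x + √r * z * x - r * x ^ 2 / 2

/-- The likelihood ratio of the Gaussian channel `y = √r X* + Z` under the prior `Q`, against pure
noise, as a function of the signal value `xs` and the noise value `z`. -/
def evidence (Q : Measure ℝ) (r xs z : ℝ) : ℝ :=
  ∫ x, rexp (logLikelihoodRatio r xs z x) ∂Q

/-- The logarithm of the evidence averaged over the noise, at a fixed signal value `xs`. -/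
def freeEnergy (Q : Measure ℝ) (r xs : ℝ) : ℝ :=
  ∫ z, log (evidence Q r xs z) ∂stdG

section Evidence

open Filter Topology Metric

variable {Q : Measure ℝ} {r : ℝ}

lemma logLikelihoodRatio_eq_sq_sub_sq (hr : 0 ≤ r) (xs z x : ℝ) :
    logLikelihoodRatio r xs z x = ((√r * xs + z) ^ 2 - (√r * (xs - x) + z) ^ 2) / 2 := by
  unfold logLikelihoodRatio
  linear_combination (x ^ 2 / 2 - xs * x) * sq_sqrt hr

lemma logLikelihoodRatio_le (hr : 0 ≤ r) (xs z x : ℝ) :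
    logLikelihoodRatio r xs z x ≤ (√r * xs + z) ^ 2 / 2 := by
  rw [logLikelihoodRatio_eq_sq_sub_sq hr]
  linarith [sq_nonneg (√r * (xs - x) + z)]

@[fun_prop]
lemma measurable_logLikelihoodRatio {α : Type*} [MeasurableSpace α] {f g h : α → ℝ}
    (hf : Measurable f) (hg : Measurable g) (hh : Measurable h) :
    Measurable fun a ↦ logLikelihoodRatio r (f a) (g a) (h a) := by
  unfold logLikelihoodRatio
  fun_prop

lemma measurable_evidence [SFinite Q] : Measurable fun q : ℝ × ℝ ↦ evidence Q r q.1 q.2 := by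
  have h : Measurable fun t : (ℝ × ℝ) × ℝ ↦
      rexp (logLikelihoodRatio r t.1.1 t.1.2 t.2) := by fun_prop
  exact (h.stronglyMeasurable.integral_prod_right (ν := Q)).measurable

lemma integrable_exp_logLikelihoodRatio [IsFiniteMeasure Q] (hr : 0 ≤ r) (xs z : ℝ) :
    Integrable (fun x ↦ rexp (logLikelihoodRatio r xs z x)) Q := by
  refine .of_bound (Measurable.aestronglyMeasurable (by fun_prop)) (rexp ((√r * xs + z) ^ 2 / 2))
    (.of_forall fun x ↦ ?_)
  rw [norm_of_nonneg (exp_pos _).le]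
  exact exp_le_exp.2 (logLikelihoodRatio_le hr xs z x)

lemma evidence_pos [IsFiniteMeasure Q] [NeZero Q] (hr : 0 ≤ r) (xs z : ℝ) :
    0 < evidence Q r xs z :=
  integral_exp_pos (integrable_exp_logLikelihoodRatio hr xs z)

lemma evidence_nonneg (Q : Measure ℝ) (r xs z : ℝ) : 0 ≤ evidence Q r xs z :=
  integral_nonneg fun _ ↦ (exp_pos _).le

lemma log_evidence_le [IsProbabilityMeasure Q] (hr : 0 ≤ r) (xs z : ℝ) :
    log (evidence Q r xs z) ≤ (√r * xs + z) ^ 2 / 2 := by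
  rw [log_le_iff_le_exp (evidence_pos hr xs z)]
  calc evidence Q r xs z ≤ ∫ _, rexp ((√r * xs + z) ^ 2 / 2) ∂Q :=
        integral_mono (integrable_exp_logLikelihoodRatio hr xs z) (integrable_const _) fun x ↦
          exp_le_exp.2 (logLikelihoodRatio_le hr xs z x)
    _ = rexp ((√r * xs + z) ^ 2 / 2) := by simp

lemma measureReal_closedBall_mul_exp_le_evidence [IsFiniteMeasure Q] (hr : 0 ≤ r) (xs z δ : ℝ) :
    Q.real (closedBall xs δ) * rexp (((√r * xs + z) ^ 2 - (√r * δ + |z|) ^ 2) / 2) ≤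
      evidence Q r xs z := by
  have hint := integrable_exp_logLikelihoodRatio (Q := Q) hr xs z
  have hball (x : ℝ) (hx : x ∈ closedBall xs δ) :
      (√r * (xs - x) + z) ^ 2 ≤ (√r * δ + |z|) ^ 2 := by
    refine sq_le_sq' (neg_le_of_abs_le ?_) (le_of_abs_le ?_) <;>
    calc |√r * (xs - x) + z| ≤ √r * |xs - x| + |z| := by
          simpa only [abs_mul, abs_of_nonneg (sqrt_nonneg r)] using abs_add_le (√r * (xs - x)) z
      _ ≤ √r * δ + |z| := by
          gcongr
          rwa [abs_sub_comm, ← Real.dist_eq, ← mem_closedBall]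
  rw [mul_comm]
  calc _ ≤ ∫ x in closedBall xs δ, rexp (logLikelihoodRatio r xs z x) ∂Q := by
        refine setIntegral_ge_of_const_le_real measurableSet_closedBall (measure_ne_top _ _)
          (fun x hx ↦ ?_) hint.integrableOn
        rw [logLikelihoodRatio_eq_sq_sub_sq hr]
        exact exp_le_exp.2 (by linarith [hball x hx])
    _ ≤ evidence Q r xs z := setIntegral_le_integral hint (.of_forall fun x ↦ (exp_pos _).le)

lemma log_measureReal_closedBall_add_le_log_evidence [IsFiniteMeasure Q] (hr : 0 ≤ r) {xs δ : ℝ}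
    (hδ : 0 < Q.real (closedBall xs δ)) (z : ℝ) :
    log (Q.real (closedBall xs δ)) + ((√r * xs + z) ^ 2 - (√r * δ + |z|) ^ 2) / 2 ≤
      log (evidence Q r xs z) := by
  have h := log_le_log (mul_pos hδ (exp_pos _))
    (measureReal_closedBall_mul_exp_le_evidence hr xs z δ)
  rwa [log_mul hδ.ne' (exp_pos _).ne', log_exp] at h

lemma tendsto_sq_mul_sqrt_add_div_atTop (a b : ℝ) :
    Tendsto (fun r ↦ (√r * a + b) ^ 2 / r) atTop (𝓝 (a ^ 2)) := by
  have h : Tendsto (fun r ↦ (a + b / √r) ^ 2) atTop (𝓝 ((a + 0) ^ 2)) :=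
    ((tendsto_const_nhds.div_atTop tendsto_sqrt_atTop).const_add a).pow 2
  rw [add_zero] at h
  refine h.congr' ?_
  filter_upwards [eventually_gt_atTop 0] with r hr
  have hsqrt : √r ≠ 0 := (sqrt_pos.2 hr).ne'
  calc (a + b / √r) ^ 2 = (√r * a + b) ^ 2 / √r ^ 2 := by field_simp
    _ = (√r * a + b) ^ 2 / r := by rw [sq_sqrt hr.le]

lemma tendsto_log_evidence_div_atTop [IsProbabilityMeasure Q] {xs : ℝ} (hxs : xs ∈ Q.support)
    (z : ℝ) : Tendsto (fun r ↦ log (evidence Q r xs z) / r) atTop (𝓝 (xs ^ 2 / 2)) := by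
  refine tendsto_order.2 ⟨fun a ha ↦ ?_, fun a ha ↦ ?_⟩
  · obtain ⟨δ, hδ, haδ⟩ : ∃ δ > 0, a < (xs ^ 2 - δ ^ 2) / 2 :=
      ⟨√(xs ^ 2 / 2 - a), sqrt_pos.2 (sub_pos.2 ha), by
        rw [sq_sqrt (sub_pos.2 ha).le]
        linarith⟩
    have hmass : 0 < Q.real (closedBall xs δ) := ENNReal.toReal_pos
      ((Measure.mem_support_iff_forall xs).1 hxs _ (closedBall_mem_nhds xs hδ)).ne'
      (measure_ne_top _ _)
    have hlow : Tendsto (fun r ↦ log (Q.real (closedBall xs δ)) / r +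
        ((√r * xs + z) ^ 2 / r - (√r * δ + |z|) ^ 2 / r) / 2) atTop
        (𝓝 (0 + (xs ^ 2 - δ ^ 2) / 2)) :=
      (tendsto_const_nhds.div_atTop tendsto_id).add
        (((tendsto_sq_mul_sqrt_add_div_atTop xs z).sub
          (tendsto_sq_mul_sqrt_add_div_atTop δ |z|)).div_const 2)
    rw [zero_add] at hlow
    filter_upwards [hlow.eventually_const_lt haδ, eventually_gt_atTop 0] with r har hr
    refine har.trans_le ?_
    calc _ = (log (Q.real (closedBall xs δ)) +
          ((√r * xs + z) ^ 2 - (√r * δ + |z|) ^ 2) / 2) / r := by ring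
      _ ≤ log (evidence Q r xs z) / r := by
          gcongr
          exact log_measureReal_closedBall_add_le_log_evidence hr.le hmass z
  · have hupp := (tendsto_sq_mul_sqrt_add_div_atTop xs z).div_const 2
    filter_upwards [hupp.eventually_lt_const ha, eventually_gt_atTop 0] with r har hr
    refine har.trans_le' ?_
    rw [div_right_comm]
    gcongr
    exact log_evidence_le hr.le xs z

lemma exp_logLikelihoodRatio_zero (r z x : ℝ) :
    rexp (logLikelihoodRatio r 0 z x) = rexp (-(r * x ^ 2 / 2)) * rexp (√r * x * z) := by
  rw [← exp_add, logLikelihoodRatio]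
  ring_nf

lemma integral_exp_logLikelihoodRatio_zero (hr : 0 ≤ r) (x : ℝ) :
    ∫ z, rexp (logLikelihoodRatio r 0 z x) ∂stdG = 1 := by
  simp only [exp_logLikelihoodRatio_zero, integral_const_mul, integral_exp_mul_stdG]
  rw [mul_pow, sq_sqrt hr, ← exp_add, neg_add_cancel, exp_zero]

lemma integrable_prod_exp_logLikelihoodRatio_zero [IsFiniteMeasure Q] (hr : 0 ≤ r) :
    Integrable (fun q : ℝ × ℝ ↦ rexp (logLikelihoodRatio r 0 q.2 q.1)) (Q.prod stdG) := by
  rw [integrable_prod_iff (Measurable.aestronglyMeasurable (by fun_prop))]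
  refine ⟨.of_forall fun x ↦ ?_, ?_⟩
  · simp only [exp_logLikelihoodRatio_zero]
    exact (integrable_exp_mul_gaussianReal _).const_mul _
  · simp only [norm_of_nonneg (exp_pos _).le, integral_exp_logLikelihoodRatio_zero hr]
    exact integrable_const 1

lemma integral_evidence_zero [IsProbabilityMeasure Q] (hr : 0 ≤ r) :
    ∫ z, evidence Q r 0 z ∂stdG = 1 := by
  simp only [evidence]
  rw [← integral_integral_swap (integrable_prod_exp_logLikelihoodRatio_zero hr)]
  simp only [integral_exp_logLikelihoodRatio_zero hr, integral_const, probReal_univ, one_smul]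

lemma freeEnergy_zero_nonpos [IsProbabilityMeasure Q] (hr : 0 ≤ r)
    (hint : Integrable (fun z ↦ log (evidence Q r 0 z)) stdG) : freeEnergy Q r 0 ≤ 0 := by
  have hevidence : Integrable (fun z ↦ evidence Q r 0 z) stdG :=
    (integrable_prod_exp_logLikelihoodRatio_zero hr).integral_prod_right
  calc freeEnergy Q r 0 ≤ ∫ z, (evidence Q r 0 z - 1) ∂stdG :=
        integral_mono hint (hevidence.sub (integrable_const 1)) fun z ↦
          log_le_sub_one_of_pos (evidence_pos hr 0 z)
    _ = 0 := by
        rw [integral_sub hevidence (integrable_const 1), integral_evidence_zero hr]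
        simp

end Evidence

section SparsePrior

variable {P : Measure ℝ} {ρ r : ℝ}

lemma integral_sparsePrior (hρ : ρ ∈ Set.Icc 0 1) {f : ℝ → ℝ} (hf : Integrable f P) :
    ∫ x, f x ∂(sparsePrior ρ P) = (1 - ρ) * f 0 + ρ * ∫ x, f x ∂P := by
  rw [sparsePrior, integral_add_measure
    ((integrable_dirac (by simp)).smul_measure ENNReal.ofReal_ne_top)
    (hf.smul_measure ENNReal.ofReal_ne_top), integral_smul_measure, integral_smul_measure,
    integral_dirac, ENNReal.toReal_ofReal hρ.1, ENNReal.toReal_ofReal (sub_nonneg.2 hρ.2),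
    smul_eq_mul, smul_eq_mul]

lemma isProbabilityMeasure_sparsePrior [IsProbabilityMeasure P] (hρ : ρ ∈ Set.Icc 0 1) :
    IsProbabilityMeasure (sparsePrior ρ P) := by
  constructor
  simp [sparsePrior, ← ENNReal.ofReal_add (sub_nonneg.2 hρ.2) hρ.1]

lemma evidence_sparsePrior [IsFiniteMeasure P] (hρ : ρ ∈ Set.Icc 0 1) (hr : 0 ≤ r) (xs z : ℝ) :
    evidence (sparsePrior ρ P) r xs z = (1 - ρ) + ρ * evidence P r xs z := by
  rw [evidence, integral_sparsePrior hρ (integrable_exp_logLikelihoodRatio hr xs z)]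
  simp [evidence, logLikelihoodRatio]

lemma log_one_sub_le_log_evidence_sparsePrior [IsFiniteMeasure P] (hρ : ρ ∈ Set.Ico 0 1)
    (hr : 0 ≤ r) (xs z : ℝ) : log (1 - ρ) ≤ log (evidence (sparsePrior ρ P) r xs z) := by
  refine log_le_log (sub_pos.2 hρ.2) ?_
  rw [evidence_sparsePrior ⟨hρ.1, hρ.2.le⟩ hr]
  exact le_add_of_nonneg_right (mul_nonneg hρ.1 (evidence_nonneg _ _ _ _))

lemma abs_log_evidence_sparsePrior_le [IsProbabilityMeasure P] (hρ : ρ ∈ Set.Ico 0 1)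
    (hr : 0 ≤ r) (xs z : ℝ) :
    |log (evidence (sparsePrior ρ P) r xs z)| ≤ -log (1 - ρ) + (r * xs ^ 2 + z ^ 2) := by
  have := isProbabilityMeasure_sparsePrior (P := P) ⟨hρ.1, hρ.2.le⟩
  have hlog : log (1 - ρ) ≤ 0 := log_nonpos (sub_pos.2 hρ.2).le (sub_le_self 1 hρ.1)
  have hsq : 0 ≤ r * xs ^ 2 + z ^ 2 := by positivity
  refine abs_le.2 ⟨?_, ?_⟩
  · linarith [log_one_sub_le_log_evidence_sparsePrior (P := P) hρ hr xs z]
  · calc log (evidence (sparsePrior ρ P) r xs z) ≤ (√r * xs + z) ^ 2 / 2 :=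
          log_evidence_le hr xs z
      _ ≤ (√r * xs) ^ 2 + z ^ 2 := by linarith [add_sq_le (a := √r * xs) (b := z)]
      _ = r * xs ^ 2 + z ^ 2 := by rw [mul_pow, sq_sqrt hr]
      _ ≤ -log (1 - ρ) + (r * xs ^ 2 + z ^ 2) := by linarith

lemma measurable_log_evidence_sparsePrior [SFinite P] :
    Measurable fun q : ℝ × ℝ ↦ log (evidence (sparsePrior ρ P) r q.1 q.2) := by
  have : SFinite (sparsePrior ρ P) := by unfold sparsePrior; infer_instance
  exact measurable_evidence.log

lemma integrable_log_evidence_sparsePrior [IsProbabilityMeasure P] (hP : MemLp id 2 P)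
    (hρ : ρ ∈ Set.Ico 0 1) (hr : 0 ≤ r) :
    Integrable (fun q : ℝ × ℝ ↦ log (evidence (sparsePrior ρ P) r q.1 q.2)) (P.prod stdG) :=
  .mono' ((integrable_const (-log (1 - ρ))).add
      (((hP.integrable_sq.const_mul r).comp_fst stdG).add (integrable_sq_stdG.comp_snd P)))
    measurable_log_evidence_sparsePrior.aestronglyMeasurable
    (.of_forall fun q ↦ abs_log_evidence_sparsePrior_le hρ hr q.1 q.2)

lemma integrable_log_evidence_sparsePrior_right [IsProbabilityMeasure P] (hρ : ρ ∈ Set.Ico 0 1)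
    (hr : 0 ≤ r) (xs : ℝ) :
    Integrable (fun z ↦ log (evidence (sparsePrior ρ P) r xs z)) stdG :=
  .mono' ((integrable_const _).add ((integrable_const _).add integrable_sq_stdG))
    (measurable_log_evidence_sparsePrior.comp measurable_prodMk_left).aestronglyMeasurable
    (.of_forall fun z ↦ abs_log_evidence_sparsePrior_le hρ hr xs z)

lemma log_one_sub_le_freeEnergy_sparsePrior [IsProbabilityMeasure P] (hρ : ρ ∈ Set.Ico 0 1)
    (hr : 0 ≤ r) (xs : ℝ) : log (1 - ρ) ≤ freeEnergy (sparsePrior ρ P) r xs := by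
  calc log (1 - ρ) = ∫ _, log (1 - ρ) ∂stdG := by simp
    _ ≤ _ := integral_mono (integrable_const _)
      (integrable_log_evidence_sparsePrior_right hρ hr xs)
      fun z ↦ log_one_sub_le_log_evidence_sparsePrior hρ hr xs z

lemma psiD_eq [IsProbabilityMeasure P] (hP : MemLp id 2 P) (hρ : ρ ∈ Set.Ico 0 1) (hr : 0 ≤ r) :
    psiD P ρ r = (1 - ρ) * freeEnergy (sparsePrior ρ P) r 0 +
      ρ * ∫ xs, freeEnergy (sparsePrior ρ P) r xs ∂P :=
  integral_sparsePrior ⟨hρ.1, hρ.2.le⟩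
    (integrable_log_evidence_sparsePrior hP hρ hr).integral_prod_left

end SparsePrior

section Limits

open Filter Topology

lemma tendsto_abs_log_nhdsGT_zero : Tendsto (fun ρ : ℝ ↦ |log ρ|) (𝓝[>] 0) atTop :=
  tendsto_abs_atBot_atTop.comp tendsto_log_nhdsGT_zero

lemma eventually_mem_Ioo_nhdsGT_zero : ∀ᶠ ρ : ℝ in 𝓝[>] 0, ρ ∈ Set.Ioo (0 : ℝ) 1 :=
  Ioo_mem_nhdsGT one_pos

lemma log_mixture_le {ρ : ℝ} (hρ : ρ ∈ Set.Ioo 0 1) (A : ℝ) :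
    log ((1 - ρ) + ρ * rexp A) ≤ log 2 + max (A + log ρ) 0 := by
  have hpos : 0 < (1 - ρ) + ρ * rexp A :=
    add_pos (sub_pos.2 hρ.2) (mul_pos hρ.1 (exp_pos A))
  rw [log_le_iff_le_exp hpos, exp_add, exp_log two_pos, two_mul]
  refine add_le_add ((sub_le_self 1 hρ.1.le).trans (one_le_exp (le_max_right _ _))) ?_
  calc ρ * rexp A = rexp (A + log ρ) := by rw [exp_add, exp_log hρ.1, mul_comm]
    _ ≤ _ := exp_le_exp.2 (le_max_left _ _)

lemma max_le_log_mixture {ρ : ℝ} (hρ : ρ ∈ Set.Ioo 0 1) (A : ℝ) :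
    max (A + log ρ) (log (1 - ρ)) ≤ log ((1 - ρ) + ρ * rexp A) := by
  have hatom : 0 < 1 - ρ := sub_pos.2 hρ.2
  have hbulk : 0 < ρ * rexp A := mul_pos hρ.1 (exp_pos A)
  refine max_le ?_ (log_le_log hatom (le_add_of_nonneg_right hbulk.le))
  calc A + log ρ = log (ρ * rexp A) := by
        rw [log_mul hρ.1.ne' (exp_pos A).ne', log_exp, add_comm]
    _ ≤ _ := log_le_log hbulk (le_add_of_nonneg_left hatom.le)

lemma tendsto_log_one_sub_div_abs_log :
    Tendsto (fun ρ : ℝ ↦ log (1 - ρ) / |log ρ|) (𝓝[>] 0) (𝓝 0) := by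
  have hcont : ContinuousAt (fun ρ : ℝ ↦ log (1 - ρ)) 0 :=
    ContinuousAt.log (by fun_prop) (by simp)
  exact (hcont.tendsto.mono_left nhdsWithin_le_nhds).div_atTop tendsto_abs_log_nhdsGT_zero

lemma tendsto_log_mixture_div_abs_log {A : ℝ → ℝ} {a : ℝ}
    (hA : Tendsto (fun ρ ↦ A ρ / |log ρ|) (𝓝[>] 0) (𝓝 a)) :
    Tendsto (fun ρ ↦ log ((1 - ρ) + ρ * rexp (A ρ)) / |log ρ|) (𝓝[>] 0)
      (𝓝 (max (a - 1) 0)) := by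
  have hlog2 : Tendsto (fun ρ : ℝ ↦ log 2 / |log ρ|) (𝓝[>] 0) (𝓝 0) :=
    tendsto_const_nhds.div_atTop tendsto_abs_log_nhdsGT_zero
  have hlow := (hA.sub_const 1).max tendsto_log_one_sub_div_abs_log
  have hupp := hlog2.add ((hA.sub_const 1).max (tendsto_const_nhds (x := (0 : ℝ))))
  rw [zero_add] at hupp
  have hscale : ∀ᶠ ρ : ℝ in 𝓝[>] 0, (A ρ + log ρ) / |log ρ| = A ρ / |log ρ| - 1 := by
    filter_upwards [eventually_mem_Ioo_nhdsGT_zero] with ρ hρ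
    have hneg : log ρ < 0 := log_neg hρ.1 hρ.2
    rw [add_div, abs_of_neg hneg, div_neg (log ρ), div_self hneg.ne, sub_eq_add_neg]
  refine tendsto_of_tendsto_of_tendsto_of_le_of_le' hlow hupp ?_ ?_
  · filter_upwards [hscale, eventually_mem_Ioo_nhdsGT_zero] with ρ hscale hρ
    rw [← hscale, max_div_div_right (abs_nonneg _)]
    gcongr
    exact max_le_log_mixture hρ _
  · filter_upwards [hscale, eventually_mem_Ioo_nhdsGT_zero] with ρ hscale hρ
    rw [← hscale, ← zero_div |log ρ|, max_div_div_right (abs_nonneg _), ← add_div]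
    gcongr
    exact log_mixture_le hρ _

variable {P : Measure ℝ} [IsProbabilityMeasure P] {r : ℝ → ℝ} {c : ℝ}

lemma eventually_pos_of_tendsto_div_abs_log (hc : 0 < c)
    (hr : Tendsto (fun ρ ↦ r ρ / |log ρ|) (𝓝[>] 0) (𝓝 c)) : ∀ᶠ ρ in 𝓝[>] 0, 0 < r ρ := by
  filter_upwards [hr.eventually_const_lt hc] with ρ hρ
  exact (div_pos_iff_of_pos_right ((abs_nonneg _).lt_of_ne' fun h ↦ by simp [h] at hρ)).1 hρ

lemma tendsto_atTop_of_tendsto_div_abs_log (hc : 0 < c)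
    (hr : Tendsto (fun ρ ↦ r ρ / |log ρ|) (𝓝[>] 0) (𝓝 c)) : Tendsto r (𝓝[>] 0) atTop := by
  refine (hr.pos_mul_atTop hc tendsto_abs_log_nhdsGT_zero).congr' ?_
  filter_upwards [tendsto_abs_log_nhdsGT_zero.eventually_gt_atTop 0] with ρ hρ
  exact div_mul_cancel₀ _ hρ.ne'

lemma tendsto_log_evidence_sparsePrior_div (hc : 0 < c)
    (hr : Tendsto (fun ρ ↦ r ρ / |log ρ|) (𝓝[>] 0) (𝓝 c)) {xs : ℝ} (hxs : xs ∈ P.support)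
    (z : ℝ) :
    Tendsto (fun ρ ↦ log (evidence (sparsePrior ρ P) (r ρ) xs z) / |log ρ|) (𝓝[>] 0)
      (𝓝 (max (c * xs ^ 2 / 2 - 1) 0)) := by
  have hrpos := eventually_pos_of_tendsto_div_abs_log hc hr
  have hlaplace : Tendsto (fun ρ ↦ log (evidence P (r ρ) xs z) / |log ρ|) (𝓝[>] 0)
      (𝓝 (xs ^ 2 / 2 * c)) := by
    refine (((tendsto_log_evidence_div_atTop hxs z).comp
      (tendsto_atTop_of_tendsto_div_abs_log hc hr)).mul hr).congr' ?_
    filter_upwards [hrpos] with ρ hρ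
    exact div_mul_div_cancel₀ hρ.ne'
  rw [mul_comm, ← mul_div_assoc] at hlaplace
  refine (tendsto_log_mixture_div_abs_log hlaplace).congr' ?_
  filter_upwards [hrpos, eventually_mem_Ioo_nhdsGT_zero] with ρ hr hρ
  rw [exp_log (evidence_pos hr.le xs z), evidence_sparsePrior ⟨hρ.1.le, hρ.2.le⟩ hr.le]

lemma eventually_abs_log_evidence_sparsePrior_div_le (hc : 0 < c)
    (hr : Tendsto (fun ρ ↦ r ρ / |log ρ|) (𝓝[>] 0) (𝓝 c)) :
    ∀ᶠ ρ in 𝓝[>] 0, ∀ xs z, |log (evidence (sparsePrior ρ P) (r ρ) xs z)| / |log ρ| ≤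
      1 + ((c + 1) * xs ^ 2 + z ^ 2) := by
  filter_upwards [eventually_pos_of_tendsto_div_abs_log hc hr, eventually_mem_Ioo_nhdsGT_zero,
    hr.eventually_lt_const (lt_add_one c), tendsto_abs_log_nhdsGT_zero.eventually_ge_atTop 1,
    tendsto_log_one_sub_div_abs_log.eventually_const_lt neg_one_lt_zero] with
    ρ hrpos hρ hrle hone hlog xs z
  calc |log (evidence (sparsePrior ρ P) (r ρ) xs z)| / |log ρ|
      ≤ (-log (1 - ρ) + (r ρ * xs ^ 2 + z ^ 2)) / |log ρ| := by
        gcongr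
        exact abs_log_evidence_sparsePrior_le ⟨hρ.1.le, hρ.2⟩ hrpos.le xs z
    _ = -(log (1 - ρ) / |log ρ|) + (r ρ / |log ρ| * xs ^ 2 + z ^ 2 / |log ρ|) := by ring
    _ ≤ 1 + ((c + 1) * xs ^ 2 + z ^ 2) := by
        gcongr
        · linarith
        · exact div_le_self (sq_nonneg z) hone

lemma tendsto_integral_freeEnergy_sparsePrior_div (hP : MemLp id 2 P) (hc : 0 < c)
    (hr : Tendsto (fun ρ ↦ r ρ / |log ρ|) (𝓝[>] 0) (𝓝 c)) :
    Tendsto (fun ρ ↦ (∫ xs, freeEnergy (sparsePrior ρ P) (r ρ) xs ∂P) / |log ρ|) (𝓝[>] 0)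
      (𝓝 (∫ x, max (c * x ^ 2 / 2 - 1) 0 ∂P)) := by
  have hprod : Tendsto
      (fun ρ ↦ ∫ q, log (evidence (sparsePrior ρ P) (r ρ) q.1 q.2) / |log ρ| ∂P.prod stdG)
      (𝓝[>] 0) (𝓝 (∫ q, max (c * q.1 ^ 2 / 2 - 1) 0 ∂P.prod stdG)) := by
    refine tendsto_integral_filter_of_dominated_convergence
      (fun q : ℝ × ℝ ↦ 1 + ((c + 1) * q.1 ^ 2 + q.2 ^ 2))
      (.of_forall fun ρ ↦
        (measurable_log_evidence_sparsePrior.div_const _).aestronglyMeasurable) ?_ ?_ ?_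
    · filter_upwards [eventually_abs_log_evidence_sparsePrior_div_le (P := P) hc hr] with ρ hρ
      refine .of_forall fun q ↦ ?_
      rw [norm_div, norm_eq_abs, norm_eq_abs, abs_abs]
      exact hρ q.1 q.2
    · exact (integrable_const 1).add (((hP.integrable_sq.const_mul (c + 1)).comp_fst stdG).add
        (integrable_sq_stdG.comp_snd P))
    · filter_upwards [Measure.quasiMeasurePreserving_fst.ae P.support_mem_ae] with q hq
      exact tendsto_log_evidence_sparsePrior_div hc hr hq q.2
  rw [integral_fun_fst (fun x ↦ max (c * x ^ 2 / 2 - 1) 0), probReal_univ, one_smul] at hprod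
  refine hprod.congr' ?_
  filter_upwards [eventually_pos_of_tendsto_div_abs_log hc hr, eventually_mem_Ioo_nhdsGT_zero]
    with ρ hrpos hρ
  rw [integral_div, integral_prod _
    (integrable_log_evidence_sparsePrior hP ⟨hρ.1.le, hρ.2⟩ hrpos.le)]
  rfl

lemma tendsto_freeEnergy_sparsePrior_zero_div (hr : ∀ᶠ ρ in 𝓝[>] 0, 0 ≤ r ρ) :
    Tendsto (fun ρ ↦ (1 - ρ) * freeEnergy (sparsePrior ρ P) (r ρ) 0 / (ρ * |log ρ|)) (𝓝[>] 0)
      (𝓝 0) := by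
  have hlow : Tendsto (fun ρ : ℝ ↦ -1 / |log ρ|) (𝓝[>] 0) (𝓝 0) :=
    tendsto_const_nhds.div_atTop tendsto_abs_log_nhdsGT_zero
  refine tendsto_of_tendsto_of_tendsto_of_le_of_le' hlow tendsto_const_nhds ?_ ?_
  · filter_upwards [hr, eventually_mem_Ioo_nhdsGT_zero] with ρ hr hρ
    have hatom : 0 < 1 - ρ := sub_pos.2 hρ.2
    calc -1 / |log ρ| = -ρ / (ρ * |log ρ|) := by
          rw [neg_div, neg_div, div_mul_eq_div_div, div_self hρ.1.ne']
      _ = (1 - ρ) * (1 - (1 - ρ)⁻¹) / (ρ * |log ρ|) := by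
          rw [mul_sub, mul_inv_cancel₀ hatom.ne']
          ring
      _ ≤ (1 - ρ) * freeEnergy (sparsePrior ρ P) (r ρ) 0 / (ρ * |log ρ|) := by
          have := hρ.1
          gcongr
          exact (one_sub_inv_le_log_of_pos hatom).trans
            (log_one_sub_le_freeEnergy_sparsePrior ⟨hρ.1.le, hρ.2⟩ hr 0)
  · filter_upwards [hr, eventually_mem_Ioo_nhdsGT_zero] with ρ hr hρ
    have := isProbabilityMeasure_sparsePrior (P := P) ⟨hρ.1.le, hρ.2.le⟩
    exact div_nonpos_of_nonpos_of_nonneg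
      (mul_nonpos_of_nonneg_of_nonpos (sub_pos.2 hρ.2).le (freeEnergy_zero_nonpos hr
        (integrable_log_evidence_sparsePrior_right ⟨hρ.1.le, hρ.2⟩ hr 0)))
      (mul_nonneg hρ.1.le (abs_nonneg _))

theorem tendsto_psiD_div (hP : MemLp id 2 P) (hc : 0 < c)
    (hr : Tendsto (fun ρ ↦ r ρ / |log ρ|) (𝓝[>] 0) (𝓝 c)) :
    Tendsto (fun ρ ↦ psiD P ρ (r ρ) / (ρ * |log ρ|)) (𝓝[>] 0)
      (𝓝 (∫ x, max (c * x ^ 2 / 2 - 1) 0 ∂P)) := by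
  have hrpos := eventually_pos_of_tendsto_div_abs_log hc hr
  have hsum := (tendsto_freeEnergy_sparsePrior_zero_div (P := P) (hrpos.mono fun _ ↦ le_of_lt)).add
    (tendsto_integral_freeEnergy_sparsePrior_div hP hc hr)
  rw [zero_add] at hsum
  refine hsum.congr' ?_
  filter_upwards [hrpos, eventually_mem_Ioo_nhdsGT_zero] with ρ hr hρ
  rw [psiD_eq hP ⟨hρ.1.le, hρ.2⟩ hr.le, add_div, mul_div_mul_left _ _ hρ.1.ne']

lemma tendsto_one_add_const_mul_abs_log_rpow_neg {s : ℝ} (hs : s < 0) (σ : ℝ) :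
    Tendsto (fun ρ : ℝ ↦ 1 + σ * |log ρ| ^ s) (𝓝[>] 0) (𝓝 1) := by
  have hpow := (tendsto_rpow_neg_atTop (neg_pos.2 hs)).comp tendsto_abs_log_nhdsGT_zero
  simpa [Function.comp_def] using (hpow.const_mul σ).const_add 1

end Limits

lemma max_sq_div_sq_sub_one {v : ℝ} (hv : 0 < v) (x : ℝ) :
    max (2 / v ^ 2 * x ^ 2 / 2 - 1) 0 =
      (if v ≤ |x| then x ^ 2 else 0) / v ^ 2 - {x : ℝ | v ≤ |x|}.indicator (fun _ ↦ 1) x := by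
  have hhalf : 2 / v ^ 2 * x ^ 2 / 2 = x ^ 2 / v ^ 2 := by ring
  have hiff : v ^ 2 ≤ x ^ 2 ↔ v ≤ |x| := by rw [sq_le_sq, abs_of_pos hv]
  rw [hhalf]
  by_cases h : v ≤ |x|
  · rw [if_pos h, Set.indicator_of_mem (show x ∈ {x | v ≤ |x|} from h)]
    exact max_eq_left (sub_nonneg.2 ((one_le_div (by positivity)).2 (hiff.2 h)))
  · rw [if_neg h, Set.indicator_of_notMem (show x ∉ {x | v ≤ |x|} from h), zero_div, sub_zero]
    exact max_eq_right (sub_nonpos.2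
      ((div_le_one (by positivity)).2 (not_le.1 (hiff.not.2 h)).le))

lemma integral_max_sq_div_sq_sub_one {P : Measure ℝ} [IsFiniteMeasure P] (hP : MemLp id 2 P)
    {v : ℝ} (hv : 0 < v) :
    ∫ x, max (2 / v ^ 2 * x ^ 2 / 2 - 1) 0 ∂P = truncSMge P v / v ^ 2 - tailProb P v := by
  have hmeas : MeasurableSet {x : ℝ | v ≤ |x|} := measurableSet_le measurable_const (by fun_prop)
  have htrunc : Integrable (fun x ↦ if v ≤ |x| then x ^ 2 else 0) P :=
    hP.integrable_sq.indicator hmeas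
  simp only [max_sq_div_sq_sub_one hv]
  rw [integral_sub (htrunc.div_const _) ((integrable_const 1).indicator hmeas), integral_div,
    integral_indicator_const _ hmeas, smul_eq_mul, mul_one]
  rfl

theorem limit_psi_at_maximizer_general {P0 : Measure ℝ} [IsProbabilityMeasure P0]
    (hP0 : MemLp id 2 P0) {γ : ℝ} (hγ : γ ≠ 0) {v : ℝ} (hv : 0 < v) (σ : ℝ) :
    Filter.Tendsto
      (fun ρ : ℝ ↦ psiD P0 ρ (γ * |log ρ| *
          (2 * (1 + σ * |log ρ| ^ (-(1 : ℝ) / 4)) / (γ * v ^ 2))) / (γ * ρ * |log ρ|))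
      (nhdsWithin 0 (Set.Ioi 0))
      (nhds (truncSMge P0 v / (γ * v ^ 2) - tailProb P0 v / γ)) := by
  have hscale : Filter.Tendsto (fun ρ : ℝ ↦ γ * |log ρ| *
      (2 * (1 + σ * |log ρ| ^ (-(1 : ℝ) / 4)) / (γ * v ^ 2)) / |log ρ|)
      (nhdsWithin 0 (Set.Ioi 0)) (nhds (2 / v ^ 2)) := by
    have h := (tendsto_one_add_const_mul_abs_log_rpow_neg
      (show -(1 : ℝ) / 4 < 0 by norm_num) σ).const_mul (2 / v ^ 2)
    rw [mul_one] at h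
    refine h.congr' ?_
    filter_upwards [tendsto_abs_log_nhdsGT_zero.eventually_gt_atTop 0] with ρ hρ
    field_simp
  have h := (tendsto_psiD_div hP0 (by positivity) hscale).div_const γ
  rw [integral_max_sq_div_sq_sub_one hP0 hv, sub_div, div_div, mul_comm (v ^ 2) γ] at h
  refine h.congr fun ρ ↦ ?_
  rw [div_div, mul_comm (ρ * |log ρ|) γ, ← mul_assoc γ ρ]

/-- Lemma 8 of the paper: limit as ρ → 0⁺ of
(1/α(ρ)) ψ_ρ((α(ρ)/ρ) · 2(1 ± |ln ρ|^{-1/4})/(γ v_k²)), with α(ρ) = γρ|ln ρ|. -/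
theorem limit_psi_at_maximizer
    (γ : ℝ) (hγ : 0 < γ)
    (K : ℕ) (hK : 0 < K) (v : Fin K → ℝ) (hvpos : 0 < v ⟨0, hK⟩) (hvmono : StrictMono v)
    (P0 : Measure ℝ) [IsProbabilityMeasure P0]
    (hsupp : ∀ᵐ x ∂P0, ∃ k : Fin K, x = v k ∨ x = -(v k)) :
    ∀ k : Fin K, ∀ σ : ℝ, σ = 1 ∨ σ = -1 →
      Filter.Tendsto
        (fun ρ : ℝ =>
          psiD P0 ρ (γ * |Real.log ρ| *
              (2 * (1 + σ * |Real.log ρ| ^ (-(1 : ℝ) / 4)) / (γ * v k ^ 2)))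
            / (γ * ρ * |Real.log ρ|))
        (nhdsWithin 0 (Set.Ioi 0))
        (nhds (truncSMge P0 (v k) / (γ * v k ^ 2) - tailProb P0 (v k) / γ)) :=
  fun k σ _ ↦ limit_psi_at_maximizer_general (memLp_id_of_ae_eq_or_eq_neg hsupp) hγ.ne'
    (hvpos.trans_le (hvmono.monotone (Nat.zero_le k.val))) σ

end DiscretePrior
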